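/- Fix ω with 0 ≤ ω < 1 and let {τ_m}_{m≥1} be a sequence of real numbers with 0 ≤ τ_m < 1 for all m and lim_{m→∞} m·τ_m = 0. Then there exists M ∈ ℕ such that for all integers m ≥ M, the derivative ∂_z ₁φ₁(0;ω;q,z) has constant sign on the open interval ]q^{−m+τ_m}, q^{−m}[; that is, for all z₁, z₂ in that interval, ∂_z ₁φ₁(0;ω;q,z)|_{z=z₁} · ∂_z ₁φ₁(0;ω;q,z)|_{z=z₂} > 0. -/

import Mathlib

/-!
Put `f(z) = ₁φ₁(0;0;q,z)`. It satisfies `f(z) = (1 - z) f(qz)`, so `f(z) = (z;q)_n f(q^n z)` for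
every `n`; in other words `f(z) = (z;q)_∞`, and this finite form replaces infinite products
throughout.

Since `1/(ω;q)_k = f(q^k ω)/f(ω) = 1/f(ω) + O(q^k)` (`inv_qPoch_sub`), the derivative of
`₁φ₁(0;ω;q,·)` at `z` is `f'(z)/f(ω)` plus a remainder. For `z ≤ q^{-m}` the remainder is bounded
termwise by a multiple of `q^m f(-q^{1/2-m})`, which is `O(q^m q^{-m(m+1)/2} q^{m/2})`
(`remainder_bound`).

For the main term write `z = q^{-m} x` with `q^{τ_m} < x < 1` and differentiate
`f(z) = (z;q)_m (1 - x) f(qx)`. The result is `q^m (z;q)_m (-f(qx) + E)` with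
`|E| ≤ const · m (1 - x)` (`euler_deriv`). As `1 - x ≤ τ_m |log q|`, the hypothesis `m τ_m → 0`
makes `E` negligible against `f(qx) ≥ f(q) > 0`. The sign of `(z;q)_m` is `(-1)^m`, and
`|(z;q)_m| = x^m q^{-m(m+1)/2} (q/x;q)_m` is at least a constant times `q^{-m(m+1)/2}`, because
`x^m ≥ q^{m τ_m}` stays away from `0`. Hence the main term beats the remainder by a factor of order
`q^{-m/2}`, and the derivative has the sign `(-1)^{m+1}` on the whole interval once `m` is large.
-/

open Filter

/-- The finite q-shifted factorial `(a;q)_n`. -/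
noncomputable def qPoch (a q : ℝ) : ℕ → ℝ := fun n => ∏ j ∈ Finset.range n, (1 - a * q ^ j)

/-- The basic hypergeometric function `₁φ₁(0;ω;q,z)`. -/
noncomputable def phi11 (ω q z : ℝ) : ℝ :=
  ∑' k : ℕ, ((-1 : ℝ) ^ k * q ^ (k * (k - 1) / 2) * z ^ k / (qPoch ω q k * qPoch q q k))

/-! ### Coefficients, summability and differentiability -/

/-- The coefficient of `z ^ k` in `₁φ₁(0;ω;q,z)`. -/
noncomputable def cf (ω q : ℝ) (k : ℕ) : ℝ :=
  (-1 : ℝ) ^ k * q ^ (k * (k - 1) / 2) / (qPoch ω q k * qPoch q q k)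

lemma tri_succ (k : ℕ) : (k + 1) * (k + 1 - 1) / 2 = k * (k - 1) / 2 + k := by
  have h1 := Nat.choose_two_right (k + 1)
  have h2 := Nat.choose_two_right k
  rw [← h1, ← h2, Nat.choose_succ_succ' k 1]
  simp [add_comm]

lemma phi11_eq (ω q z : ℝ) : phi11 ω q z = ∑' k : ℕ, cf ω q k * z ^ k := by
  unfold phi11 cf
  congr 1; ext k; ring

lemma qPoch_succ (a q : ℝ) (n : ℕ) : qPoch a q (n + 1) = qPoch a q n * (1 - a * q ^ n) := by
  simp [qPoch, Finset.prod_range_succ]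

lemma qPoch_zero_left (q : ℝ) (n : ℕ) : qPoch 0 q n = 1 := by simp [qPoch]

lemma qPoch_ge_pow {a q : ℝ} (hq0 : 0 < q) (hq1 : q < 1) (ha0 : 0 ≤ a) (ha1 : a < 1) (n : ℕ) :
    (1 - a) ^ n ≤ qPoch a q n := by
  unfold qPoch
  rw [← Finset.card_range n, ← Finset.prod_const, Finset.card_range]
  apply Finset.prod_le_prod
  · intro i _; linarith
  · intro i _
    have : q ^ i ≤ 1 := pow_le_one₀ hq0.le hq1.le
    nlinarith

lemma qPoch_pos {a q : ℝ} (hq0 : 0 < q) (hq1 : q < 1) (ha0 : 0 ≤ a) (ha1 : a < 1) (n : ℕ) :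
    0 < qPoch a q n :=
  lt_of_lt_of_le (pow_pos (by linarith) n) (qPoch_ge_pow hq0 hq1 ha0 ha1 n)

/-- `(a;q)_n` is decreasing in `a ≤ 1`. -/
lemma qPoch_anti {a b q : ℝ} (hq0 : 0 < q) (hq1 : q < 1) (hab : a ≤ b) (hb0 : 0 ≤ b)
    (hb1 : b ≤ 1) (n : ℕ) : qPoch b q n ≤ qPoch a q n := by
  unfold qPoch
  apply Finset.prod_le_prod
  · intro i _
    have : q ^ i ≤ 1 := pow_le_one₀ hq0.le hq1.le
    have : 0 < q ^ i := pow_pos hq0 i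
    nlinarith
  · intro i _
    have : 0 < q ^ i := pow_pos hq0 i
    nlinarith

lemma qPoch_le_one {a q : ℝ} (hq0 : 0 < q) (hq1 : q < 1) (ha0 : 0 ≤ a) (ha1 : a ≤ 1) (n : ℕ) :
    qPoch a q n ≤ 1 := by
  simpa [qPoch_zero_left] using qPoch_anti hq0 hq1 ha0 ha0 ha1 n

lemma summable_gauss {q : ℝ} (hq0 : 0 < q) (hq1 : q < 1) (r : ℝ) :
    Summable (fun k : ℕ => q ^ (k * (k - 1) / 2) * r ^ k) := by
  rcases eq_or_ne r 0 with rfl | hr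
  · apply summable_of_ne_finset_zero (s := {0})
    intro k hk
    have : k ≠ 0 := by simpa using hk
    simp [this]
  apply summable_of_ratio_test_tendsto_lt_one (l := 0) one_pos
  · filter_upwards with k
    have := hq0.ne'
    positivity
  · have h : (fun k : ℕ => ‖q ^ ((k + 1) * (k + 1 - 1) / 2) * r ^ (k + 1)‖ /
        ‖q ^ (k * (k - 1) / 2) * r ^ k‖) = fun k : ℕ => |r| * q ^ k := by
      ext k
      rw [tri_succ, ← norm_div, pow_add, pow_succ]
      have := hq0.ne'
      have h2 : q ^ (k * (k - 1) / 2) * q ^ k * (r ^ k * r) / (q ^ (k * (k - 1) / 2) * r ^ k)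
          = r * q ^ k := by field_simp
      rw [h2, norm_mul, Real.norm_eq_abs, Real.norm_eq_abs, abs_of_pos (pow_pos hq0 k)]
    rw [h]
    simpa using (tendsto_pow_atTop_nhds_zero_of_lt_one hq0.le hq1).const_mul |r|

lemma abs_cf {ω q : ℝ} (hq0 : 0 < q) (hq1 : q < 1) (h0 : 0 ≤ ω) (h1 : ω < 1) (k : ℕ) :
    |cf ω q k| = q ^ (k * (k - 1) / 2) / (qPoch ω q k * qPoch q q k) := by
  have := qPoch_pos hq0 hq1 h0 h1 k
  have := qPoch_pos hq0 hq1 hq0.le hq1 k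
  rw [cf, abs_div, abs_mul, abs_pow, abs_neg, abs_one, one_pow, one_mul,
    abs_of_pos (pow_pos hq0 _), abs_of_pos (by positivity)]

lemma abs_cf_le {ω q : ℝ} (hq0 : 0 < q) (hq1 : q < 1) (h0 : 0 ≤ ω) (h1 : ω < 1) (k : ℕ) :
    |cf ω q k| ≤ q ^ (k * (k - 1) / 2) * (((1 - ω) * (1 - q))⁻¹) ^ k := by
  rw [abs_cf hq0 hq1 h0 h1, inv_pow, ← div_eq_mul_inv, mul_pow]
  have := pow_pos (sub_pos.2 h1) k
  have := pow_pos (sub_pos.2 hq1) k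
  have := qPoch_ge_pow hq0 hq1 h0 h1 k
  have := qPoch_ge_pow hq0 hq1 hq0.le hq1 k
  have := qPoch_pos hq0 hq1 h0 h1 k
  gcongr

lemma summable_k {ω q : ℝ} (hq0 : 0 < q) (hq1 : q < 1) (h0 : 0 ≤ ω) (h1 : ω < 1) {R : ℝ}
    (hR : 0 ≤ R) : Summable (fun k : ℕ => |cf ω q k| * (k * R ^ (k - 1))) := by
  have hs := (summable_gauss hq0 hq1 ((((1 - ω) * (1 - q))⁻¹) * (2 * (R + 1))))
  refine Summable.of_nonneg_of_le (fun k => by positivity) (fun k => ?_) hs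
  have h2 : (k : ℝ) ≤ 2 ^ k := by exact_mod_cast Nat.lt_two_pow_self.le
  have h3 : R ^ (k - 1) ≤ (R + 1) ^ k := by
    calc R ^ (k - 1) ≤ (R + 1) ^ (k - 1) := by gcongr; linarith
      _ ≤ (R + 1) ^ k := pow_le_pow_right₀ (by linarith) (Nat.sub_le _ _)
  have h4 := abs_cf_le hq0 hq1 h0 h1 k
  calc |cf ω q k| * (k * R ^ (k - 1))
      ≤ (q ^ (k * (k - 1) / 2) * (((1 - ω) * (1 - q))⁻¹) ^ k) * (2 ^ k * (R + 1) ^ k) := by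
        gcongr
    _ = _ := by rw [mul_pow, mul_pow]; ring

lemma summable_abs {ω q : ℝ} (hq0 : 0 < q) (hq1 : q < 1) (h0 : 0 ≤ ω) (h1 : ω < 1) (R : ℝ) :
    Summable (fun k : ℕ => |cf ω q k| * |R| ^ k) := by
  have hs := (summable_gauss hq0 hq1 ((((1 - ω) * (1 - q))⁻¹) * |R|))
  refine Summable.of_nonneg_of_le (fun k => by positivity) (fun k => ?_) hs
  have h4 := abs_cf_le hq0 hq1 h0 h1 k
  calc |cf ω q k| * |R| ^ k
      ≤ (q ^ (k * (k - 1) / 2) * (((1 - ω) * (1 - q))⁻¹) ^ k) * |R| ^ k := by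
        gcongr
    _ = _ := by rw [mul_pow]; ring

lemma summable_cf {ω q : ℝ} (hq0 : 0 < q) (hq1 : q < 1) (h0 : 0 ≤ ω) (h1 : ω < 1) (z : ℝ) :
    Summable (fun k : ℕ => cf ω q k * z ^ k) := by
  apply Summable.of_norm
  simpa [abs_mul] using summable_abs hq0 hq1 h0 h1 z

lemma summable_deriv {ω q : ℝ} (hq0 : 0 < q) (hq1 : q < 1) (h0 : 0 ≤ ω) (h1 : ω < 1) (z : ℝ) :
    Summable (fun k : ℕ => cf ω q k * (k * z ^ (k - 1))) := by
  apply Summable.of_norm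
  simpa [abs_mul] using summable_k hq0 hq1 h0 h1 (abs_nonneg z)

lemma hasDerivAt_phi {ω q : ℝ} (hq0 : 0 < q) (hq1 : q < 1) (h0 : 0 ≤ ω) (h1 : ω < 1) (z : ℝ) :
    HasDerivAt (fun z => phi11 ω q z) (∑' k : ℕ, cf ω q k * (k * z ^ (k - 1))) z := by
  simp_rw [phi11_eq]
  have hz : z ∈ Metric.ball (0 : ℝ) (|z| + 1) := by simp
  refine hasDerivAt_tsum_of_isPreconnected (t := Metric.ball (0 : ℝ) (|z| + 1))
    (summable_k hq0 hq1 h0 h1 (R := |z| + 1) (by positivity)) Metric.isOpen_ball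
    (convex_ball _ _).isPreconnected (fun k y _ => (hasDerivAt_pow k y).const_mul _)
    (fun k y hy => ?_) hz (summable_cf hq0 hq1 h0 h1 z) hz
  have : |y| ≤ |z| + 1 := by
    have := Metric.mem_ball.1 hy
    rw [Real.dist_eq, sub_zero] at this
    exact this.le
  rw [norm_mul, norm_mul, norm_pow, Real.norm_eq_abs, Real.norm_eq_abs, Real.norm_eq_abs,
    Nat.abs_cast]
  gcongr

/-! ### The case `ω = 0`: Euler's product `(z;q)_∞` -/

lemma cf_zero_succ {q : ℝ} (hq0 : 0 < q) (hq1 : q < 1) (k : ℕ) :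
    cf 0 q (k + 1) * (1 - q ^ (k + 1)) = - (cf 0 q k * q ^ k) := by
  have h1 : q ^ (k + 1) < 1 := pow_lt_one₀ hq0.le hq1 (by omega)
  have h2 := (qPoch_pos hq0 hq1 hq0.le hq1 k).ne'
  have h3 : (1 - q ^ (k + 1)) ≠ 0 := by linarith
  simp only [cf, qPoch_zero_left, tri_succ]
  rw [qPoch_succ, ← pow_succ', pow_add, pow_succ]
  field_simp
  rw [pow_add]

/-- The functional equation `f(z) = (1 - z) f(qz)` characterizing `(z;q)_∞`. -/
lemma euler_step {q : ℝ} (hq0 : 0 < q) (hq1 : q < 1) (z : ℝ) :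
    phi11 0 q z = (1 - z) * phi11 0 q (q * z) := by
  have s1 := summable_cf hq0 hq1 le_rfl one_pos z
  have s2 := summable_cf hq0 hq1 le_rfl one_pos (q * z)
  have h : phi11 0 q z - phi11 0 q (q * z) = - z * phi11 0 q (q * z) := by
    rw [phi11_eq, phi11_eq, ← s1.tsum_sub s2, (s1.sub s2).tsum_eq_zero_add, ← tsum_mul_left]
    simp only [pow_zero, sub_self, zero_add]
    congr 1; ext k
    have := cf_zero_succ hq0 hq1 k
    calc _ = cf 0 q (k + 1) * (1 - q ^ (k + 1)) * z ^ (k + 1) := by rw [mul_pow]; ring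
      _ = _ := by rw [this, mul_pow]; ring
  linarith

lemma euler_iter {q : ℝ} (hq0 : 0 < q) (hq1 : q < 1) (z : ℝ) (n : ℕ) :
    phi11 0 q z = qPoch z q n * phi11 0 q (q ^ n * z) := by
  induction n with
  | zero => simp [qPoch]
  | succ n ih =>
    rw [ih, qPoch_succ, euler_step hq0 hq1 (q ^ n * z)]
    ring_nf

lemma phi_zero (ω q : ℝ) : phi11 ω q 0 = 1 := by
  rw [phi11_eq, tsum_eq_single 0]
  · simp [cf, qPoch]
  · intro k hk; simp [hk]

lemma euler_tendsto {q : ℝ} (hq0 : 0 < q) (hq1 : q < 1) (z : ℝ) :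
    Tendsto (fun n : ℕ => phi11 0 q (q ^ n * z)) atTop (nhds 1) := by
  have h := (hasDerivAt_phi hq0 hq1 le_rfl one_pos (0 : ℝ)).continuousAt
  rw [ContinuousAt, phi_zero] at h
  apply h.comp
  simpa using (tendsto_pow_atTop_nhds_zero_of_lt_one hq0.le hq1).mul_const z

lemma euler_pos {q a : ℝ} (hq0 : 0 < q) (hq1 : q < 1) (ha0 : 0 ≤ a) (ha1 : a < 1) :
    0 < phi11 0 q a := by
  obtain ⟨n, hn⟩ := ((euler_tendsto hq0 hq1 a).eventually (lt_mem_nhds one_pos)).exists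
  rw [euler_iter hq0 hq1 a n]
  exact mul_pos (qPoch_pos hq0 hq1 ha0 ha1 n) hn

lemma euler_le_one {q a : ℝ} (hq0 : 0 < q) (hq1 : q < 1) (ha0 : 0 ≤ a) (ha1 : a < 1) :
    phi11 0 q a ≤ 1 := by
  apply ge_of_tendsto (euler_tendsto hq0 hq1 a)
  filter_upwards [(euler_tendsto hq0 hq1 a).eventually (lt_mem_nhds one_pos)] with n hn
  rw [euler_iter hq0 hq1 a n]
  exact mul_le_of_le_one_left hn.le (qPoch_le_one hq0 hq1 ha0 ha1.le n)

lemma pow_mul_lt_one {q a : ℝ} (hq0 : 0 < q) (hq1 : q < 1) (ha0 : 0 ≤ a) (ha1 : a < 1) (n : ℕ) :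
    q ^ n * a < 1 :=
  lt_of_le_of_lt (mul_le_of_le_one_left ha0 (pow_le_one₀ hq0.le hq1.le)) ha1

lemma euler_le_qPoch {q a : ℝ} (hq0 : 0 < q) (hq1 : q < 1) (ha0 : 0 ≤ a) (ha1 : a < 1) (n : ℕ) :
    phi11 0 q a ≤ qPoch a q n := by
  rw [euler_iter hq0 hq1 a n]
  exact mul_le_of_le_one_right (qPoch_pos hq0 hq1 ha0 ha1 n).le
    (euler_le_one hq0 hq1 (by positivity) (pow_mul_lt_one hq0 hq1 ha0 ha1 n))

/-- `(a;q)_∞` is decreasing in `a ∈ [0, 1)`. -/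
lemma euler_anti {q a b : ℝ} (hq0 : 0 < q) (hq1 : q < 1) (ha0 : 0 ≤ a) (hab : a ≤ b)
    (hb1 : b < 1) : phi11 0 q b ≤ phi11 0 q a := by
  have h := (euler_tendsto hq0 hq1 a).const_mul (phi11 0 q b)
  rw [mul_one] at h
  apply le_of_tendsto h
  filter_upwards with n
  rw [euler_iter hq0 hq1 a n]
  have hp := euler_pos hq0 hq1 (a := q ^ n * a) (by positivity)
    (pow_mul_lt_one hq0 hq1 ha0 (by linarith) n)
  gcongr
  exact (euler_le_qPoch hq0 hq1 (ha0.trans hab) hb1 n).trans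
    (qPoch_anti hq0 hq1 hab (ha0.trans hab) hb1.le n)

/-- At negative arguments the series of `(z;q)_∞` has nonnegative terms only. -/
lemma euler_neg {q : ℝ} (hq0 : 0 < q) (hq1 : q < 1) (y : ℝ) :
    phi11 0 q (-y) = ∑' k : ℕ, |cf 0 q k| * y ^ k := by
  rw [phi11_eq]
  congr 1; ext k
  rw [abs_cf hq0 hq1 le_rfl one_pos, cf, neg_pow y]
  have : ((-1 : ℝ) ^ k) * (-1) ^ k = 1 := by rw [← mul_pow]; simp
  linear_combination (q ^ (k * (k - 1) / 2) / (qPoch 0 q k * qPoch q q k) * y ^ k) * this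

lemma euler_neg_ge_one {q : ℝ} (hq0 : 0 < q) (hq1 : q < 1) {y : ℝ} (hy : 0 ≤ y) :
    1 ≤ phi11 0 q (-y) := by
  have hs := summable_abs hq0 hq1 le_rfl one_pos y
  rw [abs_of_nonneg hy] at hs
  rw [euler_neg hq0 hq1]
  have := hs.le_tsum 0 (fun k _ => by positivity)
  simpa [cf, qPoch] using this

/-- The partial products of `(-y;q)_∞` do not exceed it, all factors being at least `1`. -/
lemma qPoch_neg_le {q : ℝ} (hq0 : 0 < q) (hq1 : q < 1) {y : ℝ} (hy : 0 ≤ y) (n : ℕ) :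
    qPoch (-y) q n ≤ phi11 0 q (-y) := by
  rw [euler_iter hq0 hq1 (-y) n]
  apply le_mul_of_one_le_right
  · apply Finset.prod_nonneg
    intro i _
    have := pow_pos hq0 i
    nlinarith
  · rw [mul_neg]
    exact euler_neg_ge_one hq0 hq1 (by positivity)

lemma euler_sub_one {q : ℝ} (hq0 : 0 < q) (hq1 : q < 1) {y : ℝ} (hy : 0 ≤ y) (hy1 : y ≤ 1) :
    |phi11 0 q y - 1| ≤ y * phi11 0 q (-1) := by
  have s1 := summable_cf hq0 hq1 le_rfl one_pos y
  have s2 := summable_abs hq0 hq1 le_rfl one_pos 1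
  simp only [abs_one] at s2
  have h0 : phi11 0 q y - 1 = ∑' k : ℕ, cf 0 q (k + 1) * y ^ (k + 1) := by
    rw [phi11_eq, s1.tsum_eq_zero_add]; simp [cf, qPoch]
  have h1 : phi11 0 q (-1) = 1 + ∑' k : ℕ, |cf 0 q (k + 1)| * 1 ^ (k + 1) := by
    rw [euler_neg hq0 hq1, s2.tsum_eq_zero_add]; simp [cf, qPoch]
  have s2' := ((summable_nat_add_iff 1).2 s2).mul_left y
  have h2 : |phi11 0 q y - 1| ≤ y * ∑' k : ℕ, |cf 0 q (k + 1)| * 1 ^ (k + 1) := by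
    rw [h0, ← tsum_mul_left, ← Real.norm_eq_abs]
    apply tsum_of_norm_bounded s2'.hasSum
    intro k
    rw [norm_mul, norm_pow, Real.norm_eq_abs, Real.norm_eq_abs, abs_of_nonneg hy, one_pow, mul_one,
      mul_comm]
    gcongr
    calc y ^ (k + 1) = y ^ k * y := pow_succ _ _
      _ ≤ 1 * y := by gcongr; exact pow_le_one₀ hy hy1
      _ = y := one_mul y
  rw [h1]
  nlinarith

/-- The convergence `1/(ω;q)_k → 1/(ω;q)_∞` is geometric. -/
lemma inv_qPoch_sub {ω q : ℝ} (hq0 : 0 < q) (hq1 : q < 1) (h0 : 0 ≤ ω) (h1 : ω < 1) (k : ℕ) :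
    |(qPoch ω q k)⁻¹ - (phi11 0 q ω)⁻¹| ≤ phi11 0 q (-1) / phi11 0 q ω * q ^ k := by
  have hf := euler_pos hq0 hq1 h0 h1
  have hp := qPoch_pos hq0 hq1 h0 h1 k
  have hN := euler_neg_ge_one hq0 hq1 zero_le_one
  have e : (qPoch ω q k)⁻¹ - (phi11 0 q ω)⁻¹ = (phi11 0 q (q ^ k * ω) - 1) / phi11 0 q ω := by
    have := euler_iter hq0 hq1 ω k
    field_simp
    linarith
  have hb := euler_sub_one hq0 hq1 (y := q ^ k * ω) (by positivity)
    (pow_mul_lt_one hq0 hq1 h0 h1 k).le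
  rw [e, abs_div, abs_of_pos hf, div_mul_eq_mul_div]
  gcongr
  have := pow_pos hq0 k
  calc _ ≤ _ := hb
    _ ≤ (q ^ k * 1) * phi11 0 q (-1) := by gcongr
    _ = _ := by ring

/-- Reversing the factors of a `q`-shifted factorial: with `z q ^ m = x`,
`(z;q)_m = (-x)^m q^{-m(m+1)/2} (q/x;q)_m`. -/
lemma qPoch_reverse {q x : ℝ} (hq0 : 0 < q) (hx : x ≠ 0) (m : ℕ) :
    qPoch (x / q ^ m) q m = (-x) ^ m / q ^ ((m + 1) * m / 2) * qPoch (q / x) q m := by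
  have hq := hq0.ne'
  induction m with
  | zero => simp [qPoch]
  | succ m ih =>
    have h : qPoch (x / q ^ (m + 1)) q (m + 1) = qPoch (x / q ^ m) q m * (1 - x / q ^ (m + 1)) := by
      simp only [qPoch]
      rw [Finset.prod_range_succ', pow_zero, mul_one]
      congr 1
      apply Finset.prod_congr rfl
      intro i _
      field_simp
      ring
    have ht : (m + 1 + 1) * (m + 1) / 2 = (m + 1) * m / 2 + (m + 1) := tri_succ (m + 1)
    rw [h, ih, ht, qPoch_succ]
    field_simp
    ring

/-! ### Comparison of general `ω` with `ω = 0` -/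

lemma nat_mul_pow_le {s : ℝ} (hs0 : 0 < s) (hs1 : s < 1) (k : ℕ) : k * s ^ k ≤ (1 - s)⁻¹ := by
  have h1 : ∑ _i ∈ Finset.range k, s ^ k ≤ ∑ i ∈ Finset.range k, s ^ i := by
    apply Finset.sum_le_sum
    intro i hi
    exact pow_le_pow_of_le_one hs0.le hs1.le (Finset.mem_range.1 hi).le
  have h2 : ∑ i ∈ Finset.range k, s ^ i ≤ ∑' i : ℕ, s ^ i :=
    (summable_geometric_of_lt_one hs0.le hs1).sum_le_tsum _ (fun i _ => by positivity)
  rw [tsum_geometric_of_lt_one hs0.le hs1] at h2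
  simpa using h1.trans h2

/-- On `[0, q^{-m}]` the derivative of `₁φ₁(0;ω;q,·)` differs from `1/(ω;q)_∞` times that of
`(z;q)_∞` by a quantity smaller by a factor `q^{m/2}` than the main term. Here `s = √q`. -/
lemma remainder_bound {ω q s : ℝ} (hq0 : 0 < q) (hq1 : q < 1) (h0 : 0 ≤ ω) (h1 : ω < 1)
    (hs0 : 0 < s) (hs1 : s < 1) (hs : s ^ 2 = q) (m : ℕ) {z : ℝ} (hz0 : 0 ≤ z)
    (hz : z ≤ 1 / q ^ m) :
    |deriv (fun z => phi11 ω q z) z - (phi11 0 q ω)⁻¹ * deriv (fun z => phi11 0 q z) z| ≤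
      q ^ m / q ^ ((m + 1) * m / 2) *
        (phi11 0 q (-1) / phi11 0 q ω * (1 - s)⁻¹ * phi11 0 q (-s) ^ 2 * s ^ m) := by
  have hf := euler_pos hq0 hq1 h0 h1
  have hN := euler_neg_ge_one hq0 hq1 zero_le_one
  have hNs := euler_neg_ge_one hq0 hq1 hs0.le
  have h1s : 0 < 1 - s := by linarith
  set C := phi11 0 q (-1) / phi11 0 q ω with hC
  have hC0 : 0 < C := by positivity
  have hsum := summable_abs hq0 hq1 le_rfl one_pos (s / q ^ m)
  rw [abs_of_pos (by positivity)] at hsum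
  have hsum' := hsum.mul_left (C * (1 - s)⁻¹ * q ^ m)
  rw [(hasDerivAt_phi hq0 hq1 h0 h1 z).deriv, (hasDerivAt_phi hq0 hq1 le_rfl one_pos z).deriv,
    ← tsum_mul_left, ← (summable_deriv hq0 hq1 h0 h1 z).tsum_sub
      ((summable_deriv hq0 hq1 le_rfl one_pos z).mul_left _), ← Real.norm_eq_abs]
  refine (tsum_of_norm_bounded hsum'.hasSum ?_).trans ?_
  · intro k
    have e : cf ω q k * (k * z ^ (k - 1)) - (phi11 0 q ω)⁻¹ * (cf 0 q k * (k * z ^ (k - 1)))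
        = cf 0 q k * (((qPoch ω q k)⁻¹ - (phi11 0 q ω)⁻¹) * (k * z ^ (k - 1))) := by
      have : cf ω q k = cf 0 q k * (qPoch ω q k)⁻¹ := by
        simp only [cf, qPoch_zero_left]
        rw [one_mul, mul_comm (qPoch ω q k), div_mul_eq_div_div, div_eq_mul_inv]
      rw [this]; ring
    have hzk : (k : ℝ) * z ^ (k - 1) ≤ k * (q ^ m * (1 / q ^ m) ^ k) := by
      rcases k with _ | k
      · simp
      · rw [Nat.add_sub_cancel, pow_succ (1 / q ^ m)]
        have : q ^ m * ((1 / q ^ m) ^ k * (1 / q ^ m)) = (1 / q ^ m) ^ k := by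
          field_simp
        rw [this]
        gcongr
    have hb := inv_qPoch_sub hq0 hq1 h0 h1 k
    have hk := nat_mul_pow_le hs0 hs1 k
    have hqk : q ^ k = s ^ k * s ^ k := by rw [← hs]; ring
    rw [e, norm_mul, norm_mul, Real.norm_eq_abs, Real.norm_eq_abs, Real.norm_eq_abs,
      abs_of_nonneg (show (0 : ℝ) ≤ k * z ^ (k - 1) by positivity)]
    calc _ ≤ |cf 0 q k| * ((C * q ^ k) * (k * (q ^ m * (1 / q ^ m) ^ k))) := by gcongr
      _ = |cf 0 q k| * (C * (k * s ^ k) * q ^ m * (s ^ k * (1 / q ^ m) ^ k)) := by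
        rw [hqk]; ring
      _ ≤ |cf 0 q k| * (C * (1 - s)⁻¹ * q ^ m * (s ^ k * (1 / q ^ m) ^ k)) := by gcongr
      _ = _ := by rw [← mul_pow, mul_one_div]; ring
  · rw [tsum_mul_left, ← euler_neg hq0 hq1, euler_iter hq0 hq1 _ m,
      show -(s / q ^ m) = (-s) / q ^ m by ring, qPoch_reverse hq0 (by linarith) m, neg_neg,
      show q / -s = -s by rw [← hs]; field_simp,
      show q ^ m * (-s / q ^ m) = -s by field_simp]
    have := qPoch_neg_le hq0 hq1 hs0.le m
    calc _ ≤ C * (1 - s)⁻¹ * q ^ m * (s ^ m / q ^ ((m + 1) * m / 2) * phi11 0 q (-s)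
          * phi11 0 q (-s)) := by gcongr
      _ = _ := by ring

/-! ### The derivative of `(z;q)_∞` near `q^{-m}` -/

lemma hasDerivAt_qPoch (q z : ℝ) (n : ℕ) (h : ∀ j < n, 1 - z * q ^ j ≠ 0) :
    HasDerivAt (fun z => qPoch z q n)
      (-(∑ j ∈ Finset.range n, q ^ j / (1 - z * q ^ j)) * qPoch z q n) z := by
  induction n with
  | zero => simpa [qPoch] using hasDerivAt_const z (1 : ℝ)
  | succ n ih =>
    have h1 := ih (fun j hj => h j (by omega))
    have h2 : HasDerivAt (fun z : ℝ => 1 - z * q ^ n) (-(q ^ n)) z := by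
      simpa using ((hasDerivAt_id z).mul_const (q ^ n)).const_sub 1
    have hn := h n (by omega)
    simp_rw [qPoch_succ]
    refine (h1.fun_mul h2).congr_deriv ?_
    rw [Finset.sum_range_succ]
    linear_combination qPoch z q n * div_mul_cancel₀ (q ^ n) hn

/-- The derivative of `(z;q)_∞` near its zero `q^{-m}`: with `x = z q^m ∈ [√q, 1)` it equals
`q^m (z;q)_m (-(qx;q)_∞ + E)`, where the error `E` is of order `m (1 - x)`. -/
lemma euler_deriv {q s : ℝ} (hq0 : 0 < q) (hq1 : q < 1) (hs : s ^ 2 = q) (hs0 : 0 < s)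
    (hs1 : s < 1) (m : ℕ) {x : ℝ} (hx : s ≤ x) (hx1 : x < 1) :
    ∃ E, deriv (fun z => phi11 0 q z) (x / q ^ m) =
        q ^ m * qPoch (x / q ^ m) q m * (-(phi11 0 q (q * x)) + E) ∧
      |E| ≤ (1 - x) * (m / (s - q) + ∑' k : ℕ, |cf 0 q k| * (k * 1 ^ (k - 1))) := by
  have hsq : 0 < s - q := by nlinarith
  have hx0 : 0 < x := by linarith
  set z := x / q ^ m with hz
  have hqm := pow_pos hq0 m
  have hzx : q ^ m * z = x := by rw [hz]; field_simp
  have hfac : ∀ j < m, z * q ^ j - 1 ≥ q ^ j / q ^ m * (s - q) := by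
    intro j hj
    have h1 : q ^ m ≤ q ^ j * q := by
      rw [← pow_succ]; exact pow_le_pow_of_le_one hq0.le hq1.le (by omega)
    have hj0 := pow_pos hq0 j
    rw [ge_iff_le, hz, ← sub_nonneg]
    have : x / q ^ m * q ^ j - 1 - q ^ j / q ^ m * (s - q) =
      (q ^ j * (x - s) + (q ^ j * q - q ^ m)) / q ^ m := by field_simp; ring
    rw [this]
    apply div_nonneg _ hqm.le
    nlinarith
  have hpos : ∀ j < m, 0 < z * q ^ j - 1 := fun j hj =>
    lt_of_lt_of_le (by positivity) (hfac j hj)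
  have hD := hasDerivAt_qPoch q z m (fun j hj => by have := hpos j hj; linarith)
  have hL : HasDerivAt (fun z : ℝ => 1 - z * q ^ m) (-(q ^ m)) z := by
    simpa using ((hasDerivAt_id z).mul_const (q ^ m)).const_sub 1
  have hG : HasDerivAt (fun z : ℝ => phi11 0 q (q ^ (m + 1) * z))
      ((∑' k : ℕ, cf 0 q k * (k * (q * x) ^ (k - 1))) * q ^ (m + 1)) z := by
    have h1 : HasDerivAt (fun z : ℝ => q ^ (m + 1) * z) (q ^ (m + 1)) z := by
      simpa using (hasDerivAt_id z).const_mul (q ^ (m + 1))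
    have hzz : q ^ (m + 1) * z = q * x := by rw [← hzx]; ring
    have h2 := hasDerivAt_phi hq0 hq1 le_rfl one_pos (q ^ (m + 1) * z)
    rw [← hzz]
    exact h2.comp z h1
  have hF := ((hD.fun_mul hL).fun_mul hG)
  have heq : (fun z => phi11 0 q z) =
      fun z => qPoch z q m * (1 - z * q ^ m) * phi11 0 q (q ^ (m + 1) * z) := by
    ext y
    rw [← qPoch_succ]
    exact euler_iter hq0 hq1 y (m + 1)
  rw [← heq] at hF
  set S := ∑ j ∈ Finset.range m, q ^ j / (1 - z * q ^ j) with hS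
  set T := ∑' k : ℕ, cf 0 q k * (k * (q * x) ^ (k - 1)) with hT
  refine ⟨(1 - x) * (-(S / q ^ m) * phi11 0 q (q * x) + q * T), ?_, ?_⟩
  · rw [hF.deriv, show q ^ (m + 1) * z = q * x by rw [← hzx]; ring,
      show z * q ^ m = x by rw [← hzx]; ring, pow_succ]
    field_simp
    ring
  · have hqx0 : 0 ≤ q * x := by positivity
    have hqx1 : q * x < 1 := by nlinarith
    have hSb : |S / q ^ m| ≤ m / (s - q) := by
      rw [abs_div, abs_of_pos hqm, div_le_iff₀ hqm]
      refine (Finset.abs_sum_le_sum_abs _ _).trans ?_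
      refine (Finset.sum_le_card_nsmul _ _ (q ^ m / (s - q)) ?_).trans ?_
      · intro j hj
        have hj' := Finset.mem_range.1 hj
        have h1 := hfac j hj'
        have h2 := hpos j hj'
        have hj0 := pow_pos hq0 j
        rw [abs_div, abs_of_pos hj0, abs_sub_comm, abs_of_pos h2, div_le_div_iff₀ h2 hsq]
        have : q ^ j * (s - q) = q ^ m * (q ^ j / q ^ m * (s - q)) := by field_simp
        rw [this]
        gcongr
      · rw [Finset.card_range, nsmul_eq_mul]
        apply le_of_eq; ring
    have hTb : |T| ≤ ∑' k : ℕ, |cf 0 q k| * (k * 1 ^ (k - 1)) := by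
      rw [hT, ← Real.norm_eq_abs]
      apply tsum_of_norm_bounded
        (summable_k hq0 hq1 le_rfl one_pos zero_le_one).hasSum
      intro k
      rw [norm_mul, norm_mul, norm_pow, Real.norm_eq_abs, Real.norm_eq_abs, Real.norm_eq_abs,
        Nat.abs_cast, abs_of_nonneg hqx0]
      gcongr
    have hf0 := euler_pos hq0 hq1 hqx0 hqx1
    have hf1 := euler_le_one hq0 hq1 hqx0 hqx1
    rw [abs_mul, abs_of_pos (by linarith : 0 < 1 - x)]
    have : 0 < 1 - x := by linarith
    gcongr
    refine (abs_add_le _ _).trans ?_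
    rw [abs_mul, abs_mul, abs_neg, abs_of_pos hf0, abs_of_pos hq0]
    have hA := abs_nonneg (S / q ^ m)
    have hB := abs_nonneg T
    have := mul_le_mul_of_nonneg_left hf1 hA
    have := mul_le_mul_of_nonneg_right hq1.le hB
    linarith

/-! ### Constancy of the sign -/

theorem stmt11 (q ω : ℝ) (hq0 : 0 < q) (hq1 : q < 1) (hω0 : 0 ≤ ω) (hω1 : ω < 1)
    (τ : ℕ → ℝ) (hτ : ∀ m, 1 ≤ m → 0 ≤ τ m ∧ τ m < 1)
    (hlim : Tendsto (fun m : ℕ => (m : ℝ) * τ m) atTop (nhds 0)) :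
    ∃ M : ℕ, ∀ m, M ≤ m →
      ∀ z₁ ∈ Set.Ioo (q ^ (-(m : ℝ) + τ m)) (q ^ (-(m : ℝ))),
      ∀ z₂ ∈ Set.Ioo (q ^ (-(m : ℝ) + τ m)) (q ^ (-(m : ℝ))),
        0 < deriv (fun z => phi11 ω q z) z₁ * deriv (fun z => phi11 ω q z) z₂ := by
  obtain ⟨s, hs0, hs1, hs, hsr⟩ : ∃ s : ℝ, 0 < s ∧ s < 1 ∧ s ^ 2 = q ∧ s = q ^ (1 / 2 : ℝ) := by
    refine ⟨√q, Real.sqrt_pos.2 hq0, ?_, Real.sq_sqrt hq0.le, Real.sqrt_eq_rpow q⟩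
    rw [Real.sqrt_lt' one_pos]; simpa using hq1
  set K := ∑' k : ℕ, |cf 0 q k| * (k * 1 ^ (k - 1)) with hK
  have hK0 : 0 ≤ K := tsum_nonneg fun k => by positivity
  set C := phi11 0 q (-1) / phi11 0 q ω * (1 - s)⁻¹ * phi11 0 q (-s) ^ 2 with hC
  have hfω := euler_pos hq0 hq1 hω0 hω1
  have hfq := euler_pos hq0 hq1 hq0.le hq1
  have hfs := euler_pos hq0 hq1 hs0.le hs1
  have hsq : 0 < s - q := by nlinarith
  have hlog : Real.log q < 0 := Real.log_neg hq0 hq1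
  -- The three smallness conditions that determine how large `m` has to be.
  have ev1 : ∀ᶠ m : ℕ in atTop, (m : ℝ) * τ m < 1 / 2 :=
    hlim.eventually (gt_mem_nhds (by norm_num))
  have ev2 : ∀ᶠ m : ℕ in atTop,
      (m : ℝ) * τ m * (-Real.log q * (1 / (s - q) + K)) < phi11 0 q q / 2 := by
    have := hlim.mul_const (-Real.log q * (1 / (s - q) + K))
    rw [zero_mul] at this
    exact this.eventually (gt_mem_nhds (by positivity))
  have ev3 : ∀ᶠ m : ℕ in atTop,
      C * s ^ m < (phi11 0 q ω)⁻¹ * (s * phi11 0 q s * (phi11 0 q q / 2)) := by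
    have := (tendsto_pow_atTop_nhds_zero_of_lt_one hs0.le hs1).const_mul C
    rw [mul_zero] at this
    exact this.eventually (gt_mem_nhds (by positivity))
  obtain ⟨M, hM⟩ := eventually_atTop.1 (((ev1.and ev2).and ev3).and (eventually_ge_atTop 1))
  refine ⟨M, fun m hm => ?_⟩
  obtain ⟨⟨⟨e1, e2⟩, e3⟩, hm1⟩ := hM m hm
  obtain ⟨hτ0, -⟩ := hτ m hm1
  have hm1' : (1 : ℝ) ≤ m := by exact_mod_cast hm1
  have hqm := pow_pos hq0 m
  have key : ∀ z ∈ Set.Ioo (q ^ (-(m : ℝ) + τ m)) (q ^ (-(m : ℝ))),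
      (-1) ^ m * deriv (fun z => phi11 ω q z) z < 0 := by
    rintro z ⟨hz1, hz2⟩
    rw [Real.rpow_add hq0] at hz1
    rw [Real.rpow_neg hq0.le, Real.rpow_natCast] at hz1 hz2
    obtain ⟨x, rfl⟩ : ∃ x, z = x / q ^ m := ⟨z * q ^ m, by field_simp⟩
    have hxτ : q ^ τ m < x := by
      rw [inv_mul_eq_div] at hz1
      exact (div_lt_div_iff_of_pos_right hqm).1 hz1
    have hx1 : x < 1 := by
      rw [← one_div] at hz2
      exact (div_lt_div_iff_of_pos_right hqm).1 hz2
    have hτ2 : τ m ≤ m * τ m := le_mul_of_one_le_left hτ0 hm1'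
    have hxs : s ≤ x := by
      rw [hsr]
      exact (Real.rpow_le_rpow_of_exponent_ge hq0 hq1.le (by linarith)).trans hxτ.le
    have hx0 : 0 < x := by linarith
    have hxm : s ≤ x ^ m := by
      calc s = q ^ (1 / 2 : ℝ) := hsr
        _ ≤ q ^ (τ m * m) := Real.rpow_le_rpow_of_exponent_ge hq0 hq1.le (by linarith)
        _ = (q ^ τ m) ^ m := by rw [Real.rpow_mul hq0.le, Real.rpow_natCast]
        _ ≤ x ^ m := by gcongr
    -- `1 - q ^ τ ≤ τ * |log q|`, so the hypothesis on `m * τ m` controls `m * (1 - x)`.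
    have hx1τ : 1 - x ≤ τ m * -Real.log q := by
      have := Real.add_one_le_exp (Real.log q * τ m)
      rw [← Real.rpow_def_of_pos hq0] at this
      linarith
    obtain ⟨E, hE, hEb⟩ := euler_deriv hq0 hq1 hs hs0 hs1 m hxs hx1
    have hEb' : |E| < phi11 0 q q / 2 := by
      refine lt_of_le_of_lt hEb (lt_of_le_of_lt ?_ e2)
      have : (m : ℝ) / (s - q) + K ≤ m * (1 / (s - q) + K) := by
        rw [mul_add, mul_one_div]; nlinarith
      calc _ ≤ (τ m * -Real.log q) * (m * (1 / (s - q) + K)) := by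
            apply mul_le_mul hx1τ this (by positivity)
            exact mul_nonneg hτ0 (by linarith)
        _ = _ := by ring
    have hfx : phi11 0 q q ≤ phi11 0 q (q * x) :=
      euler_anti hq0 hq1 (by positivity) (by nlinarith) hq1
    have hmain : phi11 0 q q / 2 ≤ phi11 0 q (q * x) - E := by
      have := (abs_lt.1 hEb').2
      linarith
    have hP : phi11 0 q s ≤ qPoch (q / x) q m := by
      have : q / x ≤ s := by
        rw [div_le_iff₀ hx0]; nlinarith
      exact (euler_le_qPoch hq0 hq1 hs0.le hs1 m).trans
        (qPoch_anti hq0 hq1 this hs0.le hs1.le m)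
    have hR := remainder_bound hq0 hq1 hω0 hω1 hs0 hs1 hs m (z := x / q ^ m) (by positivity)
      (by gcongr)
    rw [← hC] at hR
    set Q := q ^ m / q ^ ((m + 1) * m / 2) with hQ
    have hQ0 : 0 < Q := by positivity
    set d := deriv (fun z => phi11 ω q z) (x / q ^ m)
    set B := (phi11 0 q ω)⁻¹ with hB
    have hB0 : 0 < B := by positivity
    have hsgn : (-1 : ℝ) ^ m * (-x) ^ m = x ^ m := by rw [← mul_pow]; simp
    have hdE : (-1) ^ m * deriv (fun z => phi11 0 q z) (x / q ^ m) =
        -(Q * (x ^ m * qPoch (q / x) q m * (phi11 0 q (q * x) - E))) := by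
      rw [hE, qPoch_reverse hq0 hx0.ne' m, ← hsgn, hQ]
      ring
    have hlow : s * phi11 0 q s * (phi11 0 q q / 2) ≤
        x ^ m * qPoch (q / x) q m * (phi11 0 q (q * x) - E) := by
      have := hfs.trans_le hP
      gcongr
    have hR' : (-1) ^ m * (d - B * deriv (fun z => phi11 0 q z) (x / q ^ m)) ≤ Q * (C * s ^ m) := by
      refine le_trans (le_abs_self _) ?_
      rw [abs_mul, abs_pow, abs_neg, abs_one, one_pow, one_mul]
      exact hR
    have h1 := mul_lt_mul_of_pos_left e3 hQ0
    have h2 := mul_le_mul_of_nonneg_left hlow (mul_pos hQ0 hB0).le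
    have h3 : (-1) ^ m * d =
        (-1) ^ m * (d - B * deriv (fun z => phi11 0 q z) (x / q ^ m)) +
          B * ((-1) ^ m * deriv (fun z => phi11 0 q z) (x / q ^ m)) := by ring
    rw [hdE] at h3
    linarith
  intro z₁ hz₁ z₂ hz₂
  have h := mul_pos_of_neg_of_neg (key z₁ hz₁) (key z₂ hz₂)
  have hsq1 : ((-1 : ℝ) ^ m) * (-1) ^ m = 1 := by rw [← mul_pow]; simp
  calc 0 < _ := h
    _ = ((-1 : ℝ) ^ m * (-1) ^ m) * (deriv (fun z => phi11 ω q z) z₁ *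
        deriv (fun z => phi11 ω q z) z₂) := by ring
    _ = _ := by rw [hsq1, one_mul]
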